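/- Let a, b ≥ 0 with n = a + b ≥ 1, let J = ((O, I_n), (−I_n, O)) and I''_{ab} = diag(I_a, −I_b, I_a, −I_b) (both 2n×2n). For every σ ∈ S_{2k}, Σ_{p_1,…,p_{2k} ∈ {1,…,2n}} Π_{r=1}^k J_{p_{σ(2r−1)}, p_{σ(2r)}} · (J I''_{ab})_{p_{2r−1}, p_{2r}} = (−1)^{k − c(σ)} ε(σ) 2^{c(σ)} (a+b)^{ℓe(σ)} (a−b)^{ℓo(σ)}, where ℓe(σ) (resp. ℓo(σ)) is the number of connected components of Γ(σ) whose size is ≡ 0 (resp. ≡ 2) modulo 4, and c(σ) = ℓe(σ) + ℓo(σ). -/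

import Mathlib

/-!
Write each index `p_v ∈ Fin (2n)` as a pair: its half `s v` and its residue `i v` modulo `n`.
A nonzero entry of `J` or of `J I''_{ab}` joins different halves and equal residues, so the
summand is a product of a factor `FF` of `s` and a factor `HH` of `i`, and the sum is
`(∑ FF) * (∑ HH)`.

* `HH` is nonzero only if `i` is constant on the components of `Γ(σ)`. A component with `2m`
  vertices contributes `∑_x d(x)^m`, with `d` the signature: `a + b` for even `m` and `a - b` for
  odd `m` (`sum_HH`).
* `FF` is nonzero only if `s` is a proper two-colouring of `Γ(σ)`. Such a colouring exists because
  `Γ(σ)` is a union of two perfect matchings (`exists_coloring`); flipping it on components gives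
  all the others, `2^{c(σ)}` in total. On each of them `FF` equals `(-1)^{k - c(σ)} ε(σ)`
  (`sign_isCol`): reordering each edge of both matchings so that its `true` end comes first
  changes `ε(σ)` by exactly the product of signs in `FF`, and turns `σ` into a pair of permutations
  `α_true`, `α_false` of `Fin k`. The orbits of `α_false α_true⁻¹` are the components of `Γ(σ)`,
  and a permutation of `k` points with `c` orbits has sign `(-1)^{k - c}` (`sign_eq_orbits`).
-/


/-!
Weingarten calculus for classical compact Lie groups and compact symmetric spaces
(S. Matsumoto, "Weingarten calculus for matrix ensembles associated with compact
symmetric spaces"): common definitions.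

We index `{1,…,m}` by `Fin m` (0-indexed), so the pair `{2r-1, 2r}` becomes
`{2r, 2r+1}` for `r ∈ Fin k`.
-/

open MeasureTheory Finset Matrix

namespace WgPaper

/-- `lo r` is the (0-indexed) point `2r`, i.e. `2r - 1` in 1-indexed notation. -/
def lo {k : ℕ} (i : Fin k) : Fin (2 * k) := ⟨2 * (i : ℕ), by have := i.isLt; omega⟩

/-- `hi r` is the (0-indexed) point `2r + 1`, i.e. `2r` in 1-indexed notation. -/
def hi {k : ℕ} (i : Fin k) : Fin (2 * k) := ⟨2 * (i : ℕ) + 1, by have := i.isLt; omega⟩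

/-- Number of cycles of a permutation, counting fixed points as 1-cycles. -/
def cyc {m : ℕ} (σ : Equiv.Perm (Fin m)) : ℕ :=
  Multiset.card σ.cycleType + (Finset.univ.filter fun x => σ x = x).card

/-- Number of even-length cycles of a permutation. -/
def evenCycles {m : ℕ} (σ : Equiv.Perm (Fin m)) : ℕ :=
  Multiset.card (σ.cycleType.filter fun d => d % 2 = 0)

/-- Number of odd-length cycles of a permutation, counting fixed points as 1-cycles. -/
def oddCycles {m : ℕ} (σ : Equiv.Perm (Fin m)) : ℕ :=
  Multiset.card (σ.cycleType.filter fun d => d % 2 = 1)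
    + (Finset.univ.filter fun x => σ x = x).card

/-- The sign `ε(σ)` of a permutation, as an element of a commutative ring. -/
def sgn (R : Type*) [CommRing R] {m : ℕ} (σ : Equiv.Perm (Fin m)) : R :=
  ((Equiv.Perm.sign σ : ℤ) : R)

/-- Full convolution on a finite group: `(f * g)(σ) = ∑_τ f(τ) g(τ⁻¹ σ)`. -/
def conv {G : Type*} [Group G] [Fintype G] {R : Type*} [CommRing R] (f g : G → R) : G → R :=
  fun σ => ∑ τ : G, f τ * g (τ⁻¹ * σ)

/-- The Dirac function at the identity permutation. -/
def deltaId {m : ℕ} {R : Type*} [CommRing R] : Equiv.Perm (Fin m) → R :=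
  fun σ => if σ = 1 then 1 else 0

/-- The graph `Γ(σ)` on `{1,…,2k}` whose edges are `{2r-1, 2r}` and `{σ(2r-1), σ(2r)}`
(in 1-indexed notation) for `1 ≤ r ≤ k`. -/
def Gamma {k : ℕ} (σ : Equiv.Perm (Fin (2 * k))) : SimpleGraph (Fin (2 * k)) :=
  SimpleGraph.fromRel fun a b =>
    (∃ r : Fin k, a = lo r ∧ b = hi r) ∨ ∃ r : Fin k, a = σ (lo r) ∧ b = σ (hi r)

/-- `c(σ)`, the number of connected components of `Γ(σ)`. -/
noncomputable def ccount {k : ℕ} (σ : Equiv.Perm (Fin (2 * k))) : ℕ :=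
  Nat.card (Gamma σ).ConnectedComponent

/-- The number of vertices of a connected component of a graph. -/
noncomputable def compSize {V : Type*} {G : SimpleGraph V} (C : G.ConnectedComponent) : ℕ :=
  Nat.card {v // G.connectedComponentMk v = C}

/-- `ℓe(σ)`: the number of connected components of `Γ(σ)` whose size is `≡ 0 (mod 4)`. -/
noncomputable def ecomp {k : ℕ} (σ : Equiv.Perm (Fin (2 * k))) : ℕ :=
  Nat.card {C : (Gamma σ).ConnectedComponent // compSize C % 4 = 0}

/-- `ℓo(σ)`: the number of connected components of `Γ(σ)` whose size is `≡ 2 (mod 4)`. -/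
noncomputable def ocomp {k : ℕ} (σ : Equiv.Perm (Fin (2 * k))) : ℕ :=
  Nat.card {C : (Gamma σ).ConnectedComponent // compSize C % 4 = 2}

/-- Membership in the hyperoctahedral subgroup `H_k ≤ S_{2k}`: each pair
`{2i-1, 2i}` is mapped onto some pair `{2j-1, 2j}`. -/
def IsHyper {k : ℕ} (ζ : Equiv.Perm (Fin (2 * k))) : Prop :=
  ∀ i : Fin k, ∃ j : Fin k, ({ζ (lo i), ζ (hi i)} : Finset (Fin (2 * k))) = {lo j, hi j}

/-- The defining property of the set `M_{2k}` of coset representatives of `S_{2k}/H_k`: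
`σ(2i-1) < σ(2i)` for all `i` and `σ(1) < σ(3) < ⋯ < σ(2k-1)`. -/
def MProp {k : ℕ} (σ : Equiv.Perm (Fin (2 * k))) : Prop :=
  (∀ i : Fin k, σ (lo i) < σ (hi i)) ∧ ∀ i j : Fin k, i < j → σ (lo i) < σ (lo j)

open scoped Classical in
/-- The set `M_{2k}` of coset representatives of `S_{2k}/H_k`, as a `Finset`. -/
noncomputable def Mset (k : ℕ) : Finset (Equiv.Perm (Fin (2 * k))) :=
  Finset.univ.filter MProp

/-- Reduced convolution: `(f ⋆ g)(σ) = ∑_{τ ∈ M_{2k}} f(τ) g(τ⁻¹ σ)`. -/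
noncomputable def sconv {k : ℕ} {R : Type*} [CommRing R]
    (f g : Equiv.Perm (Fin (2 * k)) → R) : Equiv.Perm (Fin (2 * k)) → R :=
  fun σ => ∑ τ ∈ Mset k, f τ * g (τ⁻¹ * σ)

open scoped Classical in
/-- The indicator function `1_k` of `H_k`. -/
noncomputable def oneH {k : ℕ} {R : Type*} [CommRing R] : Equiv.Perm (Fin (2 * k)) → R :=
  fun σ => if IsHyper σ then 1 else 0

open scoped Classical in
/-- The twisted indicator function `1_k^ε` of `H_k`: `σ ↦ ε(σ)` on `H_k`, `0` elsewhere. -/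
noncomputable def oneHeps {k : ℕ} {R : Type*} [CommRing R] : Equiv.Perm (Fin (2 * k)) → R :=
  fun σ => if IsHyper σ then sgn R σ else 0

/-- `δ_σ(i,j) = ∏_{s=1}^k δ_{i_{σ(s)}, j_s}`. -/
def deltaP {k : ℕ} {α : Type*} [DecidableEq α] {R : Type*} [CommRing R]
    (σ : Equiv.Perm (Fin k)) (i j : Fin k → α) : R :=
  ∏ s : Fin k, if i (σ s) = j s then 1 else 0

/-- `Δ_σ(i) = ∏_{s=1}^k δ_{i_{σ(2s-1)}, i_{σ(2s)}}`. -/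
def DeltaO {k : ℕ} {α : Type*} [DecidableEq α] {R : Type*} [CommRing R]
    (σ : Equiv.Perm (Fin (2 * k))) (i : Fin (2 * k) → α) : R :=
  ∏ s : Fin k, if i (σ (lo s)) = i (σ (hi s)) then 1 else 0

/-- The standard skew-symmetric matrix `J_n = ((O, I_n), (−I_n, O))`. -/
def Jmat (R : Type*) [CommRing R] (n : ℕ) : Matrix (Fin (2 * n)) (Fin (2 * n)) R :=
  Matrix.of fun p q =>
    if (p : ℕ) + n = (q : ℕ) then 1 else if (q : ℕ) + n = (p : ℕ) then -1 else 0

/-- `Δ'_σ(i) = ∏_{r=1}^k ⟨i_{σ(2r-1)}, i_{σ(2r)}⟩`, where `⟨p,q⟩` is the `(p,q)` entry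
of `J_n`. -/
def DeltaSp {k n : ℕ} (R : Type*) [CommRing R]
    (σ : Equiv.Perm (Fin (2 * k))) (i : Fin (2 * k) → Fin (2 * n)) : R :=
  ∏ s : Fin k, Jmat R n (i (σ (lo s))) (i (σ (hi s)))

/-- The signature matrix `I'_{a,n-a} = diag(I_a, −I_{n-a})`, of size `n`. -/
def Iab (R : Type*) [CommRing R] (n a : ℕ) : Matrix (Fin n) (Fin n) R :=
  Matrix.of fun p q => if p = q then (if (p : ℕ) < a then 1 else -1) else 0

/-- The signature matrix `I''_{a,n-a} = diag(I_a, −I_{n-a}, I_a, −I_{n-a})`, of size `2n`. -/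
def Ippab (R : Type*) [CommRing R] (n a : ℕ) : Matrix (Fin (2 * n)) (Fin (2 * n)) R :=
  Matrix.of fun p q => if p = q then (if (p : ℕ) % n < a then 1 else -1) else 0

/-- The unitary group `U(n)` of `n × n` complex unitary matrices. -/
abbrev UG (n : ℕ) := Matrix.unitaryGroup (Fin n) ℂ

/-- The real orthogonal group `O(n)`. -/
abbrev OG (n : ℕ) := Matrix.orthogonalGroup (Fin n) ℝ

noncomputable instance (n : ℕ) : MeasurableSpace (UG n) := borel _

noncomputable instance (n : ℕ) : MeasurableSpace (OG n) := borel _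

/-- A `2n × 2n` unitary matrix lies in the compact symplectic group `Sp(2n)`
iff `S J Sᵀ = J`. -/
def IsSymplectic {n : ℕ} (S : UG (2 * n)) : Prop :=
  (S : Matrix (Fin (2 * n)) (Fin (2 * n)) ℂ) * Jmat ℂ n
    * (S : Matrix (Fin (2 * n)) (Fin (2 * n)) ℂ)ᵀ = Jmat ℂ n

/-- The function `T^{D III}_n` on `S_{2k}`:
`σ ↦ ∑_p Δ_σ(p) ∏_{r=1}^k J_{p_{2r-1}, p_{2r}}`. -/
noncomputable def TDIII (n k : ℕ) : Equiv.Perm (Fin (2 * k)) → ℝ :=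
  fun σ => ∑ p : Fin (2 * k) → Fin (2 * n),
    DeltaO σ p * ∏ r : Fin k, Jmat ℝ n (p (lo r)) (p (hi r))

/-- The function `T^{C I}_n` on `S_{2k}`:
`σ ↦ ∑_p Δ'_σ(p) ∏_{r=1}^k (J I'_{nn})_{p_{2r-1}, p_{2r}}`. -/
noncomputable def TCI (n k : ℕ) : Equiv.Perm (Fin (2 * k)) → ℂ :=
  fun σ => ∑ p : Fin (2 * k) → Fin (2 * n),
    DeltaSp ℂ σ p * ∏ r : Fin k, (Jmat ℂ n * Iab ℂ (2 * n) n) (p (lo r)) (p (hi r))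

/-! ### Common two-colourings of two matchings -/

open Equiv in
/-- Two fixed-point-free involutions of a set admit a common alternating two-colouring.
With `ρ = t u`, the point `t x` never lies on the `ρ`-orbit of `x`: it would force `t` or `u` to
have a fixed point on that orbit. So `t` induces a fixed-point-free involution on the set of
orbits, and `u` induces the same one; one orbit of each `t`-pair is coloured `true`. -/
theorem exists_coloring {V : Type*} (t u : Perm V) (ht : ∀ x, t (t x) = x)
    (hu : ∀ x, u (u x) = x) (ht' : ∀ x, t x ≠ x) (hu' : ∀ x, u x ≠ x) :
    ∃ s : V → Bool, ∀ x, s (t x) = !(s x) ∧ s (u x) = !(s x) := by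
  classical
  have tt : t * t = 1 := Equiv.ext ht
  have uu : u * u = 1 := Equiv.ext hu
  have tinv : t⁻¹ = t := inv_eq_of_mul_eq_one_left tt
  have uinv : u⁻¹ = u := inv_eq_of_mul_eq_one_left uu
  set ρ : Perm V := t * u with hρ
  have conj : ∀ m : ℤ, t * ρ ^ m = ρ ^ (-m) * t := by
    intro m
    have h1 : t * ρ * t⁻¹ = ρ⁻¹ := by
      rw [hρ, _root_.mul_inv_rev, tinv, uinv, ← mul_assoc, tt, one_mul]
    have h2 : t * ρ ^ m * t⁻¹ = ρ ^ (-m) := by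
      rw [← conj_zpow, h1, _root_.inv_zpow, _root_.zpow_neg]
    rw [← h2]; group
  have conjx : ∀ (m : ℤ) x, t ((ρ ^ m) x) = (ρ ^ (-m)) (t x) := fun m x => by
    have := congrArg (fun f : Perm V => f x) (conj m)
    simpa using this
  have ux : ∀ x, u x = t (ρ x) := fun x => by simp [hρ, ht]
  have key : ∀ x, ¬ ρ.SameCycle x (t x) := by
    rintro x ⟨m, hm⟩
    obtain ⟨j, hj | hj⟩ := Int.even_or_odd' m
    · apply ht' ((ρ ^ j) x)
      rw [conjx, ← hm, ← Perm.mul_apply, ← _root_.zpow_add]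
      congr 2; omega
    · apply hu' ((ρ ^ j) x)
      have h1 : ρ ((ρ ^ j) x) = (ρ ^ (1 + j)) x := by
        rw [_root_.zpow_one_add]; rfl
      rw [ux, h1, conjx, ← hm, ← Perm.mul_apply, ← _root_.zpow_add]
      congr 2; omega
  have tcongr : ∀ x y, ρ.SameCycle x y → ρ.SameCycle (t x) (t y) := by
    rintro x y ⟨m, rfl⟩
    exact ⟨-m, by rw [conjx]⟩
  let Q := Quotient (Perm.SameCycle.setoid ρ)
  let T : Q → Q := Quotient.map t tcongr
  let q : V → Q := fun x => Quotient.mk _ x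
  have hT : ∀ x, T (q x) = q (t x) := fun x => rfl
  have hq : ∀ x, q (ρ x) = q x := fun x => Quotient.sound (⟨-1, by simp⟩ : ρ.SameCycle _ _)
  have hqu : ∀ x, q (u x) = q (t x) := fun x => by rw [ux, ← hT, hq, hT]
  have hne : ∀ x, q x ≠ q (t x) := fun x h => key x (Quotient.exact h)
  let _ : LinearOrder Q := IsWellOrder.linearOrder WellOrderingRel
  refine ⟨fun x => decide (q x < q (t x)), fun x => ?_⟩
  have h1 : q (t (u x)) = q x := by rw [← hT, hqu, hT, ht]
  have h2 : decide (q (t x) < q x) = !decide (q x < q (t x)) := by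
    rcases lt_or_gt_of_ne (hne x) with h | h
    · simp [h, h.le]
    · simp [h, h.le]
  constructor
  · simp only [ht]; exact h2
  · simp only [h1, hqu]; exact h2

/-! ### Orbits and the sign of a permutation -/

open Equiv in
/-- If the fibres of `f` are the orbits of `π`, there are
`#cycles + #fixed points` of them. -/
theorem card_orbits {α Q : Type*} [Fintype α] [DecidableEq α] [Fintype Q] (π : Perm α)
    (f : α → Q) (hf : Function.Surjective f) (h : ∀ x y, f x = f y ↔ π.SameCycle x y) :
    Fintype.card Q = Multiset.card π.cycleType + (Fintype.card α - #π.support) := by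
  classical
  have hex : ∀ c : π.cycleFactorsFinset, ∃ x, x ∈ (c : Perm α).support := fun c =>
    ((Perm.mem_cycleFactorsFinset_iff.1 c.2).1).nonempty_support
  choose y hy using hex
  have hcy : ∀ c : π.cycleFactorsFinset, (c : Perm α) = π.cycleOf (y c) := fun c =>
    Perm.cycle_is_cycleOf (hy c) c.2
  have hyne : ∀ c, π (y c) ≠ y c := fun c => by
    have := Perm.mem_cycleFactorsFinset_support_le c.2 (hy c)
    exact Perm.mem_support.1 this
  let F : {x // π x = x} ⊕ π.cycleFactorsFinset → Q := Sum.elim (fun x => f x.1) (fun c => f (y c))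
  have hF : Function.Bijective F := by
    constructor
    · rintro (⟨x, hx⟩ | c) (⟨x', hx'⟩ | c') he
      · have : π.SameCycle x x' := (h _ _).1 he
        have := this.eq_of_left hx
        subst this; rfl
      · have : π.SameCycle x (y c') := (h _ _).1 he
        have := this.eq_of_left hx
        exact absurd (this ▸ hx) (hyne c')
      · have : π.SameCycle (y c) x' := (h _ _).1 he
        have := this.symm.eq_of_left hx'
        exact absurd (this ▸ hx') (hyne c)
      · have : π.SameCycle (y c) (y c') := (h _ _).1 he
        have := this.cycleOf_eq
        rw [← hcy, ← hcy] at this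
        rw [Subtype.ext this]
    · intro q
      obtain ⟨x, rfl⟩ := hf q
      by_cases hx : π x = x
      · exact ⟨Sum.inl ⟨x, hx⟩, rfl⟩
      · refine ⟨Sum.inr ⟨π.cycleOf x,
          Perm.cycleOf_mem_cycleFactorsFinset_iff.2 (Perm.mem_support.2 hx)⟩, ?_⟩
        refine (h _ _).2 ?_
        exact ((Perm.mem_support_cycleOf_iff' hx).1 (hy ⟨π.cycleOf x, _⟩)).symm
  rw [← Fintype.card_of_bijective hF, Fintype.card_sum, add_comm, Fintype.card_coe]
  congr 1
  · simp [Perm.cycleType_def]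
  · rw [Fintype.card_subtype, ← Finset.card_compl]
    congr 1
    ext x; simp

open Equiv in
theorem sign_eq_orbits {α Q : Type*} [Fintype α] [DecidableEq α] [Fintype Q] (π : Perm α)
    (f : α → Q) (hf : Function.Surjective f) (h : ∀ x y, f x = f y ↔ π.SameCycle x y) :
    Perm.sign π = (-1) ^ (Fintype.card α - Fintype.card Q) := by
  have h1 := card_orbits π f hf h
  have h2 : Fintype.card Q ≤ Fintype.card α := Fintype.card_le_of_surjective f hf
  have h3 : #π.support ≤ Fintype.card α := Finset.card_le_univ _
  rw [Perm.sign_of_cycleType, Perm.sum_cycleType]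
  have h4 : #π.support + Multiset.card π.cycleType =
    (Fintype.card α - Fintype.card Q) + 2 * Multiset.card π.cycleType := by omega
  rw [h4, pow_add, pow_mul]
  simp

/-! ### The pairs, the proper colourings and the components of `Γ(σ)` -/

/-- The bijection listing the points of `Fin (2 * k)` pair by pair: `(r, true) ↦ lo r` and
`(r, false) ↦ hi r`. -/
noncomputable def pr (k : ℕ) : Fin k × Bool ≃ Fin (2 * k) :=
  Equiv.ofBijective (fun x => if x.2 then lo x.1 else hi x.1) <| by
    rw [Fintype.bijective_iff_injective_and_card]
    refine ⟨?_, by simp [mul_comm]⟩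
    rintro ⟨r, b⟩ ⟨r', b'⟩ h
    cases b <;> cases b' <;> simp [lo, hi, Fin.ext_iff] at h ⊢ <;> omega

@[simp] theorem pr_true {k : ℕ} (r : Fin k) : pr k (r, true) = lo r := by simp [pr]

@[simp] theorem pr_false {k : ℕ} (r : Fin k) : pr k (r, false) = hi r := by simp [pr]

theorem lo_ne_hi {k : ℕ} (r : Fin k) : lo r ≠ hi r := by
  simp [lo, hi, Fin.ext_iff]

/-- A proper two-colouring of `Γ(σ)`: the two ends of every edge have different colours. -/
def IsCol {k : ℕ} (σ : Equiv.Perm (Fin (2 * k))) (s : Fin (2 * k) → Bool) : Prop :=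
  ∀ r, s (hi r) = !(s (lo r)) ∧ s (σ (hi r)) = !(s (σ (lo r)))

open Equiv in
theorem exists_isCol {k : ℕ} (σ : Perm (Fin (2 * k))) : ∃ s, IsCol σ s := by
  let t : Perm (Fin (2 * k)) := (pr k).permCongr (prodCongrRight fun _ => swap true false)
  have tlo : ∀ r, t (lo r) = hi r := fun r => by
    simp [t, permCongr_apply, ← pr_true, -pr_false, ← pr_false]
  have thi : ∀ r, t (hi r) = lo r := fun r => by
    simp [t, permCongr_apply, ← pr_true, -pr_false, ← pr_false]
  have ex : ∀ v, (∃ r, v = lo r) ∨ ∃ r : Fin k, v = hi r := fun v => by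
    obtain ⟨⟨r, b⟩, rfl⟩ := (pr k).surjective v
    cases b
    · exact Or.inr ⟨r, by simp⟩
    · exact Or.inl ⟨r, by simp⟩
  have tt : ∀ v, t (t v) = v := fun v => by
    rcases ex v with ⟨r, rfl⟩ | ⟨r, rfl⟩ <;> simp [tlo, thi]
  have tne : ∀ v, t v ≠ v := fun v => by
    rcases ex v with ⟨r, rfl⟩ | ⟨r, rfl⟩
    · rw [tlo]; exact (lo_ne_hi r).symm
    · rw [thi]; exact lo_ne_hi r
  obtain ⟨s, hs⟩ := exists_coloring t (σ * t * σ⁻¹) tt (fun x => by simp [tt]) tne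
    (fun x h => tne (σ⁻¹ x) (by simpa [Perm.mul_apply, ← Perm.eq_inv_iff_eq] using h))
  refine ⟨s, fun r => ⟨?_, ?_⟩⟩
  · rw [← tlo, (hs _).1]
  · have := (hs (σ (lo r))).2
    simpa [tlo] using this

section
variable {k : ℕ} (σ : Equiv.Perm (Fin (2 * k)))

theorem mk_pair (r : Fin k) :
    (Gamma σ).connectedComponentMk (hi r) = (Gamma σ).connectedComponentMk (lo r) := by
  refine (SimpleGraph.ConnectedComponent.sound (SimpleGraph.Adj.reachable ?_)).symm
  rw [Gamma, SimpleGraph.fromRel_adj]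
  exact ⟨lo_ne_hi r, Or.inl (Or.inl ⟨r, rfl, rfl⟩)⟩

theorem mk_pair' (r : Fin k) :
    (Gamma σ).connectedComponentMk (σ (hi r)) = (Gamma σ).connectedComponentMk (σ (lo r)) := by
  refine (SimpleGraph.ConnectedComponent.sound (SimpleGraph.Adj.reachable ?_)).symm
  rw [Gamma, SimpleGraph.fromRel_adj]
  exact ⟨fun h => lo_ne_hi r (σ.injective h), Or.inl (Or.inr ⟨r, rfl, rfl⟩)⟩

/-- A function taking equal values at the two ends of every edge is constant on components. -/
theorem mk_invariant {β : Type*} (φ : Fin (2 * k) → β) (h1 : ∀ r, φ (hi r) = φ (lo r))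
    (h2 : ∀ r, φ (σ (hi r)) = φ (σ (lo r))) {v w : Fin (2 * k)}
    (h : (Gamma σ).connectedComponentMk v = (Gamma σ).connectedComponentMk w) : φ v = φ w := by
  obtain ⟨p⟩ := SimpleGraph.ConnectedComponent.exact h
  clear h
  induction p with
  | nil => rfl
  | cons hadj _ ih =>
    rw [← ih]
    rw [Gamma, SimpleGraph.fromRel_adj] at hadj
    rcases hadj.2 with (⟨r, rfl, rfl⟩ | ⟨r, rfl, rfl⟩) | (⟨r, rfl, rfl⟩ | ⟨r, rfl, rfl⟩)
    · exact (h1 r).symm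
    · exact (h2 r).symm
    · exact h1 r
    · exact h2 r

theorem exists_factor {β : Type*} (φ : Fin (2 * k) → β) (h1 : ∀ r, φ (hi r) = φ (lo r))
    (h2 : ∀ r, φ (σ (hi r)) = φ (σ (lo r))) :
    ∃ j : (Gamma σ).ConnectedComponent → β, ∀ v, j ((Gamma σ).connectedComponentMk v) = φ v := by
  have hs : ∀ C : (Gamma σ).ConnectedComponent, ∃ v, (Gamma σ).connectedComponentMk v = C :=
    fun C => C.exists_rep
  choose g hg using hs
  exact ⟨fun C => φ (g C), fun v => mk_invariant σ φ h1 h2 (hg _)⟩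

end
/-! ### The sum over the halves -/

/-- The sign attached to a colour: the nonzero entry of `J_n` in a row of half `b` is `chi b`,
where `true` stands for the first half. -/
def chi (b : Bool) : ℤˣ := if b then 1 else -1

open Equiv in
/-- Exchanges the two elements of the pairs `r` with `f r = false`. -/
def hp {k : ℕ} (f : Fin k → Bool) : Perm (Fin k × Bool) :=
  prodCongrRight fun r => if f r then 1 else swap true false

open Equiv in
theorem sign_hp {k : ℕ} (f : Fin k → Bool) : Perm.sign (hp f) = ∏ r, chi (f r) := by
  rw [hp, Perm.sign_prodCongrRight]
  refine Finset.prod_congr rfl fun r _ => ?_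
  cases h : f r <;> simp [chi]

open Equiv in
/-- Listing both matchings of `Γ(σ)` with the `true` vertex of each edge first turns `σ` into a
permutation of `Fin k × Bool` that preserves colours, i.e. a pair of permutations of `Fin k`.
Their quotient has the components of `Γ(σ)` as orbits, which determines its sign. -/
theorem sign_isCol {k : ℕ} (σ : Perm (Fin (2 * k))) (s : Fin (2 * k) → Bool) (hs : IsCol σ s) :
    ∏ r, (chi (s (σ (lo r))) * chi (s (lo r))) = (-1) ^ (k - ccount σ) * Perm.sign σ := by
  classical
  let e : Fin k × Bool ≃ Fin (2 * k) := (hp fun r => s (lo r)).trans (pr k)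
  let e' : Fin k × Bool ≃ Fin (2 * k) := (hp fun r => s (σ (lo r))).trans ((pr k).trans σ)
  have he : ∀ r b, e (r, b) = if (b == s (lo r)) then lo r else hi r := by
    intro r b
    cases b <;> cases h : s (lo r) <;> simp [e, hp, h]
  have he' : ∀ r b, e' (r, b) = if (b == s (σ (lo r))) then σ (lo r) else σ (hi r) := by
    intro r b
    cases b <;> cases h : s (σ (lo r)) <;> simp [e', hp, h]
  have ce : ∀ r b, s (e (r, b)) = b := by
    intro r b
    have := (hs r).1
    rw [he]
    cases b <;> cases h : s (lo r) <;> simp_all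
  have ce' : ∀ r b, s (e' (r, b)) = b := by
    intro r b
    have := (hs r).2
    rw [he']
    cases b <;> cases h : s (σ (lo r)) <;> simp_all
  let P : Perm (Fin k × Bool) := e'.trans e.symm
  have hP : ∀ x, e (P x) = e' x := fun x => by simp [P]
  have hP2 : ∀ r b, (P (r, b)).2 = b := fun r b => by
    have h1 := ce (P (r, b)).1 (P (r, b)).2
    rw [Prod.mk.eta, hP, ce'] at h1
    exact h1.symm
  let α : Bool → Perm (Fin k) := fun b => Equiv.ofBijective (fun r => (P (r, b)).1) <| by
    refine Finite.injective_iff_bijective.1 fun r r' h => ?_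
    have : P (r, b) = P (r', b) := Prod.ext h (by rw [hP2, hP2])
    simpa using this
  have hα : ∀ r b, P (r, b) = (α b r, b) := fun r b => Prod.ext rfl (hP2 r b)
  have hα' : ∀ r b, e (α b r, b) = e' (r, b) := fun r b => by rw [← hα, hP]
  have hPα : P = prodCongrLeft α := by
    ext1 ⟨r, b⟩
    rw [hα]; rfl
  have sP1 : Perm.sign P = Perm.sign (α true) * Perm.sign (α false) := by
    rw [hPα, Perm.sign_prodCongrLeft]; simp
  have sP2 : Perm.sign P = (∏ r, chi (s (lo r))) * Perm.sign σ * ∏ r, chi (s (σ (lo r))) := by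
    have : P = (hp fun r => s (σ (lo r))).trans
        ((((pr k).trans σ).trans (pr k).symm).trans (hp fun r => s (lo r)).symm) := rfl
    rw [this, Perm.sign_trans, Perm.sign_trans, Perm.sign_trans_trans_symm, Perm.sign_symm,
      sign_hp, sign_hp]
  have mke : ∀ r b, (Gamma σ).connectedComponentMk (e (r, b)) =
      (Gamma σ).connectedComponentMk (lo r) := fun r b => by
    rw [he]; split_ifs
    · rfl
    · exact mk_pair σ r
  have mke' : ∀ r b, (Gamma σ).connectedComponentMk (e' (r, b)) =
      (Gamma σ).connectedComponentMk (σ (lo r)) := fun r b => by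
    rw [he']; split_ifs
    · rfl
    · exact mk_pair' σ r
  let π : Perm (Fin k) := α false * (α true)⁻¹
  have hπ : ∀ r, π (α true r) = α false r := fun r => by simp [π]
  let f : Fin k → (Gamma σ).ConnectedComponent := fun r => (Gamma σ).connectedComponentMk (lo r)
  have hfα : ∀ r b, f (α b r) = (Gamma σ).connectedComponentMk (σ (lo r)) := fun r b => by
    rw [← mke' r b, ← hα', mke]
  have hfπ : ∀ r, f (π r) = f r := fun r => by
    obtain ⟨r, rfl⟩ := (α true).surjective r
    rw [hπ, hfα, hfα]
  have hfs : Function.Surjective f := fun C => by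
    obtain ⟨v, rfl⟩ := C.exists_rep
    obtain ⟨⟨r, b⟩, rfl⟩ := e.surjective v
    exact ⟨r, (mke r b).symm⟩
  have hfz : ∀ (m : ℕ) r, f ((π ^ m) r) = f r := fun m r => by
    induction m with
    | zero => rfl
    | succ m ih => rw [pow_succ', Perm.mul_apply, hfπ, ih]
  have hff : ∀ x y, f x = f y ↔ π.SameCycle x y := by
    intro x y
    constructor
    · intro h
      let φ : Fin (2 * k) → Quotient (Perm.SameCycle.setoid π) :=
        fun v => Quotient.mk _ (e.symm v).1
      have φe : ∀ r b, φ (e (r, b)) = Quotient.mk _ r := fun r b => by simp [φ]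
      have φlo : ∀ r, φ (lo r) = Quotient.mk _ r := fun r => by
        rw [← φe r (s (lo r)), he]; simp
      have φhi : ∀ r, φ (hi r) = Quotient.mk _ r := fun r => by
        rw [← φe r (!s (lo r)), he]; simp
      have φe' : ∀ r b, φ (e' (r, b)) = Quotient.mk _ (α true r) := fun r b => by
        rw [← hα', φe]
        cases b
        · exact Quotient.sound (⟨-1, by simp [← hπ]⟩ : π.SameCycle _ _)
        · rfl
      have φlo' : ∀ r, φ (σ (lo r)) = Quotient.mk _ (α true r) := fun r => by
        rw [← φe' r (s (σ (lo r))), he']; simp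
      have φhi' : ∀ r, φ (σ (hi r)) = Quotient.mk _ (α true r) := fun r => by
        rw [← φe' r (!s (σ (lo r))), he']; simp
      have := mk_invariant σ φ (fun r => by rw [φlo, φhi]) (fun r => by rw [φlo', φhi']) h
      rw [φlo, φlo] at this
      exact Quotient.exact this
    · intro h
      obtain ⟨m, -, hm⟩ := h.exists_pow_eq'
      rw [← hm, hfz]
  let _ : Fintype (Gamma σ).ConnectedComponent := Fintype.ofFinite _
  have h1 := sign_eq_orbits π f hfs hff
  rw [Fintype.card_fin, ← Nat.card_eq_fintype_card] at h1
  change _ = (-1 : ℤˣ) ^ (k - ccount σ) at h1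
  have h2 : Perm.sign π = Perm.sign P := by
    rw [sP1, Perm.sign_mul, Perm.sign_inv]; exact mul_comm _ _
  rw [← h1, h2, sP2, Finset.prod_mul_distrib]
  have h3 : Perm.sign σ * Perm.sign σ = 1 := Int.units_mul_self _
  rw [mul_right_comm, mul_assoc _ (Perm.sign σ) (Perm.sign σ), h3, mul_one, mul_comm]

/-- The factor of the summand that depends only on the halves `s v` of the indices `p_v`. -/
noncomputable def FF {k : ℕ} (σ : Equiv.Perm (Fin (2 * k))) (s : Fin (2 * k) → Bool) : ℂ :=
  ∏ r, ((if s (σ (lo r)) ≠ s (σ (hi r)) then ((chi (s (σ (lo r))) : ℤ) : ℂ) else 0) *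
    (if s (lo r) ≠ s (hi r) then ((chi (s (lo r)) : ℤ) : ℂ) else 0))

theorem FF_of_isCol {k : ℕ} (σ : Equiv.Perm (Fin (2 * k))) (s : Fin (2 * k) → Bool)
    (hs : IsCol σ s) : FF σ s = (-1) ^ (k - ccount σ) * sgn ℂ σ := by
  have h := congrArg (fun u : ℤˣ => ((u : ℤ) : ℂ)) (sign_isCol σ s hs)
  simp only [Units.val_mul, Units.val_pow_eq_pow_val, Units.coe_prod] at h
  push_cast at h
  rw [sgn, FF]
  rw [Finset.prod_congr rfl (fun r _ => ?_)]
  · exact h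
  · rw [(hs r).1, (hs r).2]
    simp

theorem FF_of_not {k : ℕ} (σ : Equiv.Perm (Fin (2 * k))) (s : Fin (2 * k) → Bool)
    (hs : ¬ IsCol σ s) : FF σ s = 0 := by
  rw [IsCol, not_forall] at hs
  obtain ⟨r, hr⟩ := hs
  refine Finset.prod_eq_zero (Finset.mem_univ r) ?_
  by_contra hc
  apply hr
  simp only [mul_ne_zero_iff, ne_eq, ite_eq_right_iff, Classical.not_imp] at hc
  obtain ⟨⟨h1, -⟩, h2, -⟩ := hc
  revert h1 h2
  cases s (σ (lo r)) <;> cases s (σ (hi r)) <;> cases s (lo r) <;> cases s (hi r) <;> simp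

theorem sum_FF {k : ℕ} (σ : Equiv.Perm (Fin (2 * k))) :
    ∑ s, FF σ s = (-1) ^ (k - ccount σ) * sgn ℂ σ * 2 ^ ccount σ := by
  classical
  let _ : Fintype (Gamma σ).ConnectedComponent := Fintype.ofFinite _
  obtain ⟨s₀, h₀⟩ := exists_isCol σ
  -- every proper colouring is `s₀` flipped on a set of components
  let g : ((Gamma σ).ConnectedComponent → Bool) → Fin (2 * k) → Bool :=
    fun j v => xor (s₀ v) (j ((Gamma σ).connectedComponentMk v))
  have hg : Function.Injective g := fun j j' h => by
    funext C
    obtain ⟨v, rfl⟩ := C.exists_rep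
    exact Bool.xor_right_inj.1 (congrFun h v)
  have hgc : ∀ j, IsCol σ (g j) := fun j r => by
    simp only [g, mk_pair, mk_pair', (h₀ r).1, (h₀ r).2, Bool.not_xor, and_self]
  rw [← Fintype.sum_of_injective g hg
    (fun _ => (-1) ^ (k - ccount σ) * sgn ℂ σ) (FF σ) ?_ (fun j => (FF_of_isCol σ _ (hgc j)).symm)]
  · simp only [Finset.sum_const, Finset.card_univ, nsmul_eq_mul, Fintype.card_fun,
      Fintype.card_bool]
    rw [← Nat.card_eq_fintype_card]
    change ((2 ^ ccount σ : ℕ) : ℂ) * _ = _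
    push_cast; ring
  · intro s hs
    refine FF_of_not σ s fun hc => hs ?_
    obtain ⟨j, hj⟩ := exists_factor σ (fun v => xor (s₀ v) (s v))
      (fun r => by rw [(h₀ r).1, (hc r).1]; simp) (fun r => by rw [(h₀ r).2, (hc r).2]; simp)
    exact ⟨j, funext fun v => by simp [g, hj]⟩

/-! ### The sum over the residues -/

/-- The factor of the summand that depends only on the residues `i v` modulo `n` of the indices
`p_v`, for a general diagonal signature `d` in place of `I'_{ab}`. -/
noncomputable def HH {k n : ℕ} (d : Fin n → ℂ) (σ : Equiv.Perm (Fin (2 * k)))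
    (i : Fin (2 * k) → Fin n) : ℂ :=
  ∏ r, ((if i (σ (lo r)) = i (σ (hi r)) then 1 else 0) *
    (if i (lo r) = i (hi r) then d (i (lo r)) else 0))

/-- A component is a union of pairs `{lo r, hi r}`. -/
theorem compSize_eq {k : ℕ} (σ : Equiv.Perm (Fin (2 * k))) (C : (Gamma σ).ConnectedComponent) :
    compSize C = 2 * Nat.card {r : Fin k // (Gamma σ).connectedComponentMk (lo r) = C} := by
  have h : ∀ x : Fin k × Bool, (Gamma σ).connectedComponentMk (lo x.1) = C ↔
      (Gamma σ).connectedComponentMk (pr k x) = C := by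
    rintro ⟨r, b⟩
    cases b <;> simp [mk_pair]
  have h2 := Nat.card_congr (Equiv.prodSubtypeFstEquivSubtypeProd
    (p := fun r => (Gamma σ).connectedComponentMk (lo r) = C) (β := Bool))
  rw [compSize, ← Nat.card_congr ((pr k).subtypeEquiv h), h2, Nat.card_prod]
  simp [Nat.mul_comm]

theorem ccount_eq {k : ℕ} (σ : Equiv.Perm (Fin (2 * k))) : ccount σ = ecomp σ + ocomp σ := by
  classical
  let _ : Fintype (Gamma σ).ConnectedComponent := Fintype.ofFinite _
  rw [ccount, ecomp, ocomp, Nat.card_eq_fintype_card, Nat.card_eq_fintype_card,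
    Nat.card_eq_fintype_card, Fintype.card_subtype, Fintype.card_subtype, ← Finset.card_univ,
    ← Finset.card_filter_add_card_filter_not (fun C => compSize C % 4 = 0)]
  congr 2
  ext C
  simp only [Finset.mem_filter, Finset.mem_univ, true_and, compSize_eq]
  omega

/-- `HH d σ i` vanishes unless `i` is constant on components, so the sum runs over functions on
the set of components and splits as a product of power sums of `d`, one for each component, with
exponent half its size. -/
theorem sum_HH {k n : ℕ} (d : Fin n → ℂ) (A B : ℂ) (hA : ∀ m, ∑ x, d x ^ (2 * m) = A)
    (hB : ∀ m, ∑ x, d x ^ (2 * m + 1) = B) (σ : Equiv.Perm (Fin (2 * k))) :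
    ∑ i, HH d σ i = A ^ ecomp σ * B ^ ocomp σ := by
  classical
  let _ : Fintype (Gamma σ).ConnectedComponent := Fintype.ofFinite _
  let M : (Gamma σ).ConnectedComponent → ℕ :=
    fun C => #{r : Fin k | (Gamma σ).connectedComponentMk (lo r) = C}
  have hM : ∀ C, compSize C = 2 * M C := fun C => by
    rw [compSize_eq, Nat.card_eq_fintype_card, Fintype.card_subtype]
  let g : ((Gamma σ).ConnectedComponent → Fin n) → Fin (2 * k) → Fin n :=
    fun j v => j ((Gamma σ).connectedComponentMk v)
  have hg : Function.Injective g := fun j j' h => by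
    funext C
    obtain ⟨v, rfl⟩ := C.exists_rep
    exact congrFun h v
  rw [← Fintype.sum_of_injective g hg
    (fun j => ∏ C, d (j C) ^ M C) (HH d σ) ?_ ?_]
  · rw [← Fintype.prod_sum (fun C x => d x ^ M C)]
    have h1 : ∀ C, ∑ x, d x ^ M C = if compSize C % 4 = 0 then A else B := fun C => by
      rcases Nat.even_or_odd' (M C) with ⟨m, hm | hm⟩
      · rw [if_pos (by rw [hM]; omega), hm, hA]
      · rw [if_neg (by rw [hM]; omega), hm, hB]
    rw [Finset.prod_congr rfl (fun C _ => h1 C), Finset.prod_ite, Finset.prod_const,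
      Finset.prod_const, ecomp, ocomp, Nat.card_eq_fintype_card, Nat.card_eq_fintype_card,
      Fintype.card_subtype, Fintype.card_subtype]
    congr 3
    ext C
    simp only [Finset.mem_filter, Finset.mem_univ, true_and, hM]
    omega
  · intro i hi'
    by_contra hc
    apply hi'
    rw [HH, ← ne_eq, Finset.prod_ne_zero_iff] at hc
    simp only [Finset.mem_univ, forall_const, mul_ne_zero_iff, ne_eq, ite_eq_right_iff,
      Classical.not_imp] at hc
    obtain ⟨j, hj⟩ := exists_factor σ i (fun r => (hc r).2.1.symm) (fun r => (hc r).1.1.symm)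
    exact ⟨j, funext fun v => by simp [g, hj]⟩
  · intro j
    simp only [HH, g, mk_pair, mk_pair', if_true, one_mul]
    rw [← Finset.prod_fiberwise Finset.univ (fun r : Fin k => (Gamma σ).connectedComponentMk (lo r))]
    refine Finset.prod_congr rfl fun C _ => ?_
    rw [Finset.prod_congr rfl (g := fun _ => d (j C)), Finset.prod_const]
    intro r hr
    rw [(Finset.mem_filter.1 hr).2]

/-! ### The matrices in terms of halves and residues -/

/-- Splits an index of `Fin (2 * n)` into its half (`true` for the first) and its residue
modulo `n`. -/
noncomputable def halves (n : ℕ) : Bool × Fin n ≃ Fin (2 * n) :=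
  Equiv.ofBijective (fun x => ⟨x.2 + (if x.1 then 0 else n), by
      have := x.2.isLt; split_ifs <;> omega⟩) <| by
    rw [Fintype.bijective_iff_injective_and_card]
    refine ⟨?_, by simp⟩
    rintro ⟨b, i⟩ ⟨b', i'⟩ h
    cases b <;> cases b' <;> simp [Fin.ext_iff] at h ⊢ <;> omega

theorem halves_val {n : ℕ} (b : Bool) (i : Fin n) :
    ((halves n (b, i) : Fin (2 * n)) : ℕ) = i + if b then 0 else n := rfl

/-- The diagonal entry of `I'_{ab}` at `i`. -/
noncomputable def dd (a b : ℕ) (i : Fin (a + b)) : ℂ := if (i : ℕ) < a then 1 else -1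

theorem Jmat_halves {n : ℕ} (s s' : Bool) (i i' : Fin n) :
    Jmat ℂ n (halves n (s, i)) (halves n (s', i')) =
      (if s ≠ s' then ((chi s : ℤ) : ℂ) else 0) * (if i = i' then 1 else 0) := by
  have := i.isLt
  have := i'.isLt
  simp only [Jmat, Matrix.of_apply, halves_val, chi, Fin.ext_iff]
  cases s <;> cases s' <;> simp <;> split_ifs <;> first | rfl | omega

theorem JI_halves {a b : ℕ} (s s' : Bool) (i i' : Fin (a + b)) :
    (Jmat ℂ (a + b) * Ippab ℂ (a + b) a) (halves _ (s, i)) (halves _ (s', i')) =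
      (if s ≠ s' then ((chi s : ℤ) : ℂ) else 0) * (if i = i' then dd a b i else 0) := by
  have hd : Ippab ℂ (a + b) a = Matrix.diagonal
      (fun p : Fin (2 * (a + b)) => if (p : ℕ) % (a + b) < a then (1 : ℂ) else -1) := by
    ext p q
    simp only [Ippab, Matrix.of_apply, Matrix.diagonal_apply]
  have hm : ((halves _ (s', i') : Fin (2 * (a + b))) : ℕ) % (a + b) = i' := by
    rw [halves_val]
    cases s' <;> simp [Nat.mod_eq_of_lt i'.isLt]
  rw [hd, Matrix.mul_diagonal, Jmat_halves, hm, mul_assoc]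
  congr 1
  by_cases h : i = i'
  · subst h; simp [dd]
  · simp [h]

theorem sum_dd_even (a b m : ℕ) : ∑ x, dd a b x ^ (2 * m) = (a : ℂ) + b := by
  have : ∀ x, dd a b x ^ (2 * m) = 1 := fun x => by
    rw [pow_mul, dd]; split_ifs <;> simp
  simp [this]

theorem sum_dd_odd (a b m : ℕ) : ∑ x, dd a b x ^ (2 * m + 1) = (a : ℂ) - b := by
  have : ∀ x, dd a b x ^ (2 * m + 1) = dd a b x := fun x => by
    rw [pow_succ, pow_mul, dd]; split_ifs <;> simp
  simp only [this]
  rw [Fin.sum_univ_add]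
  simp [dd, sub_eq_add_neg]

/-- `𝒯_σ(J, J I''_{ab}) = T^{C II}_{ab}(σ)`. -/
theorem stmt17 (a b k : ℕ) (hn : 1 ≤ a + b) (σ : Equiv.Perm (Fin (2 * k))) :
    (∑ p : Fin (2 * k) → Fin (2 * (a + b)), ∏ r : Fin k,
        Jmat ℂ (a + b) (p (σ (lo r))) (p (σ (hi r))) *
          (Jmat ℂ (a + b) * Ippab ℂ (a + b) a) (p (lo r)) (p (hi r))
      = (-1 : ℂ) ^ (k - ccount σ) * sgn ℂ σ * 2 ^ ccount σ *
          ((a : ℂ) + b) ^ ecomp σ * ((a : ℂ) - b) ^ ocomp σ) ∧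
    ccount σ = ecomp σ + ocomp σ := by
  refine ⟨?_, ccount_eq σ⟩
  let E : (Fin (2 * k) → Bool) × (Fin (2 * k) → Fin (a + b)) ≃
      (Fin (2 * k) → Fin (2 * (a + b))) :=
    (Equiv.arrowProdEquivProdArrow _ _ _).symm.trans
      (Equiv.arrowCongr (Equiv.refl _) (halves (a + b)))
  have hE : ∀ s i v, E (s, i) v = halves (a + b) (s v, i v) := fun s i v => rfl
  rw [← E.sum_comp, Fintype.sum_prod_type]
  have key : ∀ s i, ∏ r : Fin k,
      Jmat ℂ (a + b) (E (s, i) (σ (lo r))) (E (s, i) (σ (hi r))) *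
        (Jmat ℂ (a + b) * Ippab ℂ (a + b) a) (E (s, i) (lo r)) (E (s, i) (hi r)) =
      FF σ s * HH (dd a b) σ i := by
    intro s i
    rw [FF, HH, ← Finset.prod_mul_distrib]
    refine Finset.prod_congr rfl fun r _ => ?_
    rw [hE, hE, hE, hE, Jmat_halves, JI_halves]
    ring
  simp only [key]
  rw [← Finset.sum_mul_sum, sum_FF,
    sum_HH (dd a b) _ _ (sum_dd_even a b) (sum_dd_odd a b), mul_assoc _ (_ ^ _) (_ ^ _)]

end WgPaper
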